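/- There exists a nontrivial, countable, locally finite, existentially closed Heyting algebra. -/

import Mathlib

/-- Formal Heyting terms in `n` variables. -/
inductive HeytingTerm (n : ℕ) : Type
  | var : Fin n → HeytingTerm n
  | bot : HeytingTerm n
  | top : HeytingTerm n
  | inf : HeytingTerm n → HeytingTerm n → HeytingTerm n
  | sup : HeytingTerm n → HeytingTerm n → HeytingTerm n
  | himp : HeytingTerm n → HeytingTerm n → HeytingTerm n

namespace HeytingTerm

/-- Evaluation of a Heyting term in a Heyting algebra. -/
def eval {n : ℕ} {H : Type*} [HeytingAlgebra H] (v : Fin n → H) : HeytingTerm n → H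
  | var i => v i
  | bot => ⊥
  | top => ⊤
  | inf a b => a.eval v ⊓ b.eval v
  | sup a b => a.eval v ⊔ b.eval v
  | himp a b => a.eval v ⇨ b.eval v

/-- The degree of a Heyting term: the maximal number of nested occurrences of `⇨`. -/
def degree {n : ℕ} : HeytingTerm n → ℕ
  | var _ => 0
  | bot => 0
  | top => 0
  | inf a b => max a.degree b.degree
  | sup a b => max a.degree b.degree
  | himp a b => max a.degree b.degree + 1

end HeytingTerm

/-- `b` is a solution of the system `(t, s₁, …, s_κ)` with parameters `a`. -/
def IsSolution {l m κ : ℕ} {H : Type*} [HeytingAlgebra H]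
    (t : HeytingTerm (l + m)) (s : Fin κ → HeytingTerm (l + m))
    (a : Fin l → H) (b : Fin m → H) : Prop :=
  t.eval (Fin.append a b) = ⊤ ∧ ∀ k, (s k).eval (Fin.append a b) ≠ ⊤

/-- The system `(t, s₁, …, s_κ)` with parameters `a` has a solution in `H`. -/
def HasSolution {l m κ : ℕ} {H : Type*} [HeytingAlgebra H]
    (t : HeytingTerm (l + m)) (s : Fin κ → HeytingTerm (l + m)) (a : Fin l → H) : Prop :=
  ∃ b : Fin m → H, IsSolution t s a b

/-- A Heyting algebra is existentially closed if every system with parameters in `H`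
having a solution in an extension of `H` already has a solution in `H`. -/
def IsExtClosed (H : Type*) [HeytingAlgebra H] : Prop :=
  ∀ (K : Type*) [HeytingAlgebra K] (f : HeytingHom H K), Function.Injective f →
    ∀ {l m κ : ℕ} (t : HeytingTerm (l + m)) (s : Fin κ → HeytingTerm (l + m)) (a : Fin l → H),
      HasSolution t s (fun i => f (a i)) → HasSolution t s a

/-- A Heyting subalgebra: a subset containing `⊥`, `⊤` and closed under `⊓`, `⊔`, `⇨`. -/
structure HeytingSubalgebra (H : Type*) [HeytingAlgebra H] where
  carrier : Set H
  bot_mem : ⊥ ∈ carrier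
  top_mem : ⊤ ∈ carrier
  inf_mem : ∀ {a b : H}, a ∈ carrier → b ∈ carrier → a ⊓ b ∈ carrier
  sup_mem : ∀ {a b : H}, a ∈ carrier → b ∈ carrier → a ⊔ b ∈ carrier
  himp_mem : ∀ {a b : H}, a ∈ carrier → b ∈ carrier → a ⇨ b ∈ carrier

/-- A Heyting algebra is locally finite if every finite subset is contained in a finite
subalgebra. -/
def LocallyFiniteHA (H : Type*) [HeytingAlgebra H] : Prop :=
  ∀ s : Finset H, ∃ S : HeytingSubalgebra H, S.carrier.Finite ∧ ↑s ⊆ S.carrier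

/-!
If a system with parameters in a finite Heyting algebra `A` has a solution in an extension `K` of
`A`, the bounded sublattice of `K` generated by `A`, the solution and the values of all implications
occurring in the system is finite, hence a Heyting algebra, and it agrees with `K` on those
implications; so the system is solvable in a finite extension of `A`. Finite extensions of `A` can
be amalgamated: dually, a finite Heyting algebra is the algebra of lower sets of its poset of
sup-prime elements, embeddings are surjective p-morphisms, and the fibre product of two
surjective p-morphisms projects onto both factors by surjective p-morphisms. So one finite
extension of `A` solves, for finitely many systems and all parameters in `A`, everything that is
solvable in some extension of `A`. There are only countably many systems, and the union of a chain
of such finite extensions, in which every system is treated at all late stages, is existentially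
closed.
-/

open Function

universe u v w

/-! ### Transporting solutions along homomorphisms -/

section Transport

variable {l m κ : ℕ} {H : Type u} {K : Type v} [HeytingAlgebra H] [HeytingAlgebra K]

theorem comp_finAppend {α : Type u} {β : Type v} (f : α → β) (a : Fin l → α) (b : Fin m → α) :
    f ∘ Fin.append a b = Fin.append (f ∘ a) (f ∘ b) := by
  funext i
  refine Fin.addCases (fun i => ?_) (fun i => ?_) i <;> simp

theorem HeytingTerm.eval_comp {n : ℕ} (f : HeytingHom H K) (v : Fin n → H) (t : HeytingTerm n) :
    t.eval (f ∘ v) = f (t.eval v) := by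
  induction t with
  | var i => rfl
  | bot => exact (map_bot f).symm
  | top => exact (map_top f).symm
  | inf a b iha ihb => simp only [eval, iha, ihb, map_inf]
  | sup a b iha ihb => simp only [eval, iha, ihb, map_sup]
  | himp a b iha ihb => simp only [eval, iha, ihb, map_himp]

variable {t : HeytingTerm (l + m)} {s : Fin κ → HeytingTerm (l + m)}

theorem isSolution_comp_iff {f : HeytingHom H K} (hf : Injective f) {a : Fin l → H}
    {b : Fin m → H} : IsSolution t s (f ∘ a) (f ∘ b) ↔ IsSolution t s a b := by
  simp only [IsSolution, ← comp_finAppend, HeytingTerm.eval_comp, ne_eq, hf.eq_iff' (map_top f)]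

theorem HasSolution.map {a : Fin l → H} (h : HasSolution t s a) {f : HeytingHom H K}
    (hf : Injective f) : HasSolution t s (f ∘ a) :=
  let ⟨b, hb⟩ := h
  ⟨f ∘ b, (isSolution_comp_iff hf).2 hb⟩

end Transport

/-! ### Finite embeddability -/

section FiniteEmbeddability

theorem map_himp_of_mem_range {F : Type w} {X : Type u} {K : Type v}
    [GeneralizedHeytingAlgebra X] [GeneralizedHeytingAlgebra K] [FunLike F X K]
    [InfHomClass F X K] {e : F} (he : Injective e) {x y : X} (hxy : e x ⇨ e y ∈ Set.range e) :
    e (x ⇨ y) = e x ⇨ e y := by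
  obtain ⟨z, hz⟩ := hxy
  have map_le_map_iff (p q : X) : e p ≤ e q ↔ p ≤ q :=
    (orderEmbeddingOfInjective e he).le_iff_le
  have himp_eq : x ⇨ y = z := eq_of_forall_le_iff fun w => by
    rw [le_himp_iff, ← map_le_map_iff, map_inf, ← le_himp_iff, ← hz, map_le_map_iff]
  rw [himp_eq, hz]

variable {X : Type u} {K : Type v} [HeytingAlgebra X] [HeytingAlgebra K]

/-- The values at `v` of the subterms of the form `a ⇨ b`: these are the elements a bounded
sublattice must contain for the evaluation at `v` to be computed correctly in it. -/
def HeytingTerm.himpValues {n : ℕ} (v : Fin n → K) : HeytingTerm n → Set K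
  | var _ => ∅
  | bot => ∅
  | top => ∅
  | inf a b => a.himpValues v ∪ b.himpValues v
  | sup a b => a.himpValues v ∪ b.himpValues v
  | himp a b => insert (a.eval v ⇨ b.eval v) (a.himpValues v ∪ b.himpValues v)

theorem HeytingTerm.finite_himpValues {n : ℕ} (v : Fin n → K) (t : HeytingTerm n) :
    (t.himpValues v).Finite := by
  induction t with
  | var | bot | top => exact Set.finite_empty
  | inf a b iha ihb => exact iha.union ihb
  | sup a b iha ihb => exact iha.union ihb
  | himp a b iha ihb => exact (iha.union ihb).insert _

theorem HeytingTerm.eval_comp_of_himpValues_subset {n : ℕ} {e : BoundedLatticeHom X K}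
    (he : Injective e) (v : Fin n → X) {t : HeytingTerm n}
    (ht : t.himpValues (e ∘ v) ⊆ Set.range e) : t.eval (e ∘ v) = e (t.eval v) := by
  induction t with
  | var i => rfl
  | bot => exact (map_bot e).symm
  | top => exact (map_top e).symm
  | inf a b iha ihb =>
    obtain ⟨ha, hb⟩ := Set.union_subset_iff.1 ht
    simp only [eval, iha ha, ihb hb, map_inf]
  | sup a b iha ihb =>
    obtain ⟨ha, hb⟩ := Set.union_subset_iff.1 ht
    simp only [eval, iha ha, ihb hb, map_sup]
  | himp a b iha ihb =>
    obtain ⟨hab, hsub⟩ := Set.insert_subset_iff.1 ht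
    obtain ⟨ha, hb⟩ := Set.union_subset_iff.1 hsub
    rw [iha ha, ihb hb] at hab
    simp only [eval, iha ha, ihb hb, map_himp_of_mem_range he hab]

theorem exists_heytingHom_factorization {A : Type w} [HeytingAlgebra A]
    {e : BoundedLatticeHom X K} (he : Injective e) (f : HeytingHom A K)
    (hf : Set.range f ⊆ Set.range e) : ∃ j : HeytingHom A X, e ∘ j = f := by
  choose j hj using fun a => hf ⟨a, rfl⟩
  refine ⟨{ toFun := j, map_sup' := fun a b => he ?_, map_inf' := fun a b => he ?_,
            map_bot' := he ?_, map_himp' := fun a b => he ?_ }, funext hj⟩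
  · rw [map_sup, hj, hj, hj, map_sup]
  · rw [map_inf, hj, hj, hj, map_inf]
  · rw [map_bot, hj, map_bot]
  · rw [map_himp_of_mem_range he, hj, hj, hj, map_himp]
    exact ⟨j (a ⇨ b), by rw [hj, hj, hj, map_himp]⟩

theorem exists_finite_boundedLatticeHom {K : Type v} [DistribLattice K] [BoundedOrder K]
    {S : Set K} (hS : S.Finite) :
    ∃ (X : HeytAlg.{v}) (_ : Finite X) (e : BoundedLatticeHom X K),
      Injective e ∧ S ⊆ Set.range e := by
  let T : Set K := insert ⊥ (insert ⊤ S)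
  have hT : T ⊆ latticeClosure T := subset_latticeClosure
  let L : Sublattice K :=
    ⟨latticeClosure T, isSublattice_latticeClosure.supClosed, isSublattice_latticeClosure.infClosed⟩
  have : Finite L := ((hS.insert ⊤).insert ⊥).latticeClosure
  let _ : Fintype L := Fintype.ofFinite L
  let _ : BoundedOrder L := Subtype.boundedOrder (hT (.inl rfl)) (hT (.inr (.inl rfl)))
  let _ : CompleteDistribLattice L := Fintype.toCompleteDistribLattice L
  exact ⟨.of L, this, { L.subtype with map_top' := rfl, map_bot' := rfl },
    Subtype.val_injective, fun x hx => ⟨⟨x, hT (.inr (.inr hx))⟩, rfl⟩⟩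

theorem exists_finite_hasSolution {l m κ : ℕ} {t : HeytingTerm (l + m)}
    {s : Fin κ → HeytingTerm (l + m)} {A : Type u} [HeytingAlgebra A] [Finite A]
    {f : HeytingHom A K} (hf : Injective f) {a : Fin l → A} (h : HasSolution t s (f ∘ a)) :
    ∃ (X : HeytAlg.{v}) (_ : Finite X) (j : HeytingHom A X),
      Injective j ∧ HasSolution t s (j ∘ a) := by
  obtain ⟨b, ht, hs⟩ := h
  let v := Fin.append (f ∘ a) b
  obtain ⟨X, hX, e, he, hrange⟩ := exists_finite_boundedLatticeHom
    ((((Set.finite_range f).union (Set.finite_range b)).union (t.finite_himpValues v)).union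
      (Set.finite_iUnion fun k => (s k).finite_himpValues v))
  simp only [Set.union_subset_iff, Set.iUnion_subset_iff] at hrange
  obtain ⟨⟨⟨hf_range, hb_range⟩, ht_range⟩, hs_range⟩ := hrange
  obtain ⟨j, hj⟩ := exists_heytingHom_factorization he f hf_range
  choose c hc using fun i => hb_range ⟨i, rfl⟩
  have hv : e ∘ Fin.append (j ∘ a) c = v := by
    rw [comp_finAppend, ← comp_assoc, hj, show e ∘ c = b from funext hc]
  rw [← hv] at ht_range hs_range
  refine ⟨X, hX, j, .of_comp (f := e) (hj ▸ hf), c, he ?_, fun k hk => hs k ?_⟩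
  · rw [← HeytingTerm.eval_comp_of_himpValues_subset he _ ht_range, hv, ht, map_top]
  · change (s k).eval v = ⊤
    rw [← hv, HeytingTerm.eval_comp_of_himpValues_subset he _ (hs_range k), hk, map_top]

end FiniteEmbeddability

/-! ### Duality between finite Heyting algebras and finite posets -/

theorem exists_supPrime_le_not_le {B : Type u} [DistribLattice B] [OrderBot B] [WellFoundedLT B]
    {x y : B} (hxy : ¬x ≤ y) : ∃ z, SupPrime z ∧ z ≤ x ∧ ¬z ≤ y := by
  obtain ⟨s, rfl, hs⟩ := exists_supIrred_decomposition x
  obtain ⟨z, hz, hzy⟩ : ∃ z ∈ s, ¬z ≤ y := by simpa [Finset.sup_le_iff] using hxy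
  exact ⟨z, (hs hz).supPrime, Finset.le_sup (f := id) hz, hzy⟩

theorem lowerSet_mem_himp_iff {X : Type u} [Preorder X] {s t : LowerSet X} {x : X} :
    x ∈ s ⇨ t ↔ ∀ y ≤ x, y ∈ s → y ∈ t := by
  rw [← LowerSet.Iic_le, le_himp_iff]
  exact ⟨fun h y hyx hys => h ⟨hyx, hys⟩, fun h y hy => h y hy.1 hy.2⟩

/-- A p-morphism from a preorder `X` to the poset of sup-prime elements of `B`, encoded as a map
into `B` itself. Points are ordered so that the dual algebra is formed by the lower sets of `X`,
hence the lifting condition concerns elements below. -/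
structure IsPMorphism {B : Type u} {X : Type v} [SemilatticeSup B] [Preorder X] (π : X → B) :
    Prop where
  supPrime (x : X) : SupPrime (π x)
  monotone : Monotone π
  exists_le_eq (x : X) {b : B} (hb : SupPrime b) (hbx : b ≤ π x) : ∃ y ≤ x, π y = b

namespace IsPMorphism

variable {B : Type u} {X : Type v} [HeytingAlgebra B] [WellFoundedLT B] [Preorder X] {π : X → B}

theorem le_himp_iff (hπ : IsPMorphism π) {x : X} {a b : B} :
    π x ≤ a ⇨ b ↔ ∀ y ≤ x, π y ≤ a → π y ≤ b := by
  refine ⟨fun h y hyx hya => (le_inf ((hπ.monotone hyx).trans h) hya).trans himp_inf_le,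
    fun h => ?_⟩
  by_contra hx
  have not_le : ¬π x ⊓ a ≤ b := fun h => hx (_root_.le_himp_iff.2 h)
  obtain ⟨z, hz, hzx, hzb⟩ := exists_supPrime_le_not_le not_le
  obtain ⟨y, hyx, rfl⟩ := hπ.exists_le_eq x hz (hzx.trans inf_le_left)
  exact hzb (h y hyx (hzx.trans inf_le_right))

/-- The Heyting homomorphism dual to a p-morphism. -/
def lowerSetHom (hπ : IsPMorphism π) : HeytingHom B (LowerSet X) where
  toFun b := ⟨{x | π x ≤ b}, fun _ _ hyx hx => (hπ.monotone hyx).trans hx⟩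
  map_sup' _ _ := LowerSet.ext <| Set.ext fun x => (hπ.supPrime x).le_sup
  map_inf' _ _ := LowerSet.ext <| Set.ext fun _ => le_inf_iff
  map_bot' := LowerSet.ext <| Set.ext fun x => iff_of_false
    (fun hx => (hπ.supPrime x).ne_bot (le_bot_iff.1 hx)) id
  map_himp' _ _ := LowerSet.ext <| Set.ext fun _ => hπ.le_himp_iff.trans
    (lowerSet_mem_himp_iff (s := ⟨_, _⟩) (t := ⟨_, _⟩)).symm

theorem lowerSetHom_injective (hπ : IsPMorphism π) (hsurj : ∀ b, SupPrime b → ∃ x, π x = b) :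
    Injective hπ.lowerSetHom := by
  have le_of_map_le {a b : B} (hab : hπ.lowerSetHom a ≤ hπ.lowerSetHom b) : a ≤ b := by
    by_contra h
    obtain ⟨z, hz, hza, hzb⟩ := exists_supPrime_le_not_le h
    obtain ⟨x, rfl⟩ := hsurj z hz
    exact hzb (hab hza)
  exact fun a b h => le_antisymm (le_of_map_le h.le) (le_of_map_le h.ge)

end IsPMorphism

-- Passing to the dual poset and back moves a finite algebra into any universe.
theorem exists_finite_extension_universe (B : Type u) [HeytingAlgebra B] [Finite B] :
    ∃ (D : HeytAlg.{v}) (_ : Finite D) (f : HeytingHom B D), Injective f := by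
  let π : Shrink.{v} {b : B // SupPrime b} → B := fun x => ((equivShrink _).symm x).1
  have hsurj (b : B) (hb : SupPrime b) : ∃ x, π x = b := ⟨equivShrink _ ⟨b, hb⟩, by simp [π]⟩
  have hπ : IsPMorphism π :=
    { supPrime := fun x => ((equivShrink _).symm x).2
      monotone := fun _ _ h => h
      exists_le_eq := fun x b hb hbx => by
        obtain ⟨y, rfl⟩ := hsurj b hb
        exact ⟨y, hbx, rfl⟩ }
  have : Finite (Shrink.{v} {b : B // SupPrime b}) := .of_equiv _ (equivShrink _)
  exact ⟨.of (LowerSet (Shrink {b : B // SupPrime b})), inferInstanceAs (Finite (LowerSet _)),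
    hπ.lowerSetHom, hπ.lowerSetHom_injective hsurj⟩

/-! ### Amalgamation -/

section Amalgamation

variable {A : Type w} {B : Type u} {C : Type v} [HeytingAlgebra A] [HeytingAlgebra B]
  [HeytingAlgebra C]

-- With `p` the least element with `b ≤ f p` and `r` the largest with `¬b ≤ f r`, any sup-prime
-- witness of `¬c ⊓ g p ≤ g r` has the required trace on `A`.
theorem exists_supPrime_le_forall_le_iff [Finite A] [WellFoundedLT C] (f : HeytingHom A B)
    (g : HeytingHom A C) {b : B} (hb : SupPrime b) {c : C} (hcb : ∀ a, c ≤ g a → b ≤ f a) :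
    ∃ z, SupPrime z ∧ z ≤ c ∧ ∀ a, b ≤ f a ↔ z ≤ g a := by
  classical
  cases nonempty_fintype A
  let p : A := ({a | b ≤ f a} : Finset A).inf id
  let r : A := ({a | ¬b ≤ f a} : Finset A).sup id
  have hbp : b ≤ f p := by simp [p, map_finset_inf]
  have hbr : ¬b ≤ f r := by simp [r, map_finset_sup, hb.le_finset_sup]
  have not_le : ¬c ⊓ g p ≤ g r := fun hle => by
    rw [← le_himp_iff, ← map_himp] at hle
    have hb_himp : b ≤ f p ⇨ f r := (hcb _ hle).trans (map_himp f p r).le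
    exact hbr ((le_inf hb_himp hbp).trans himp_inf_le)
  obtain ⟨z, hz, hzle, hzr⟩ := exists_supPrime_le_not_le not_le
  refine ⟨z, hz, hzle.trans inf_le_left, fun a => ⟨fun hba => ?_, fun hza => ?_⟩⟩
  · have hpa : p ≤ a := Finset.inf_le (f := id) (by simpa using hba)
    exact (hzle.trans inf_le_right).trans (OrderHomClass.mono g hpa)
  · by_contra hba
    have har : a ≤ r := Finset.le_sup (f := id) (by simpa using hba)
    exact hzr (hza.trans (OrderHomClass.mono g har))

/-- The fibre product, over the dual poset of `A`, of the dual posets of `B` and `C`: pairs of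
sup-prime elements inducing the same prime filter of `A`. -/
abbrev FiberProduct (f : HeytingHom A B) (g : HeytingHom A C) : Type (max u v) :=
  {x : B × C // SupPrime x.1 ∧ SupPrime x.2 ∧ ∀ a, x.1 ≤ f a ↔ x.2 ≤ g a}

namespace FiberProduct

variable {f : HeytingHom A B} {g : HeytingHom A C} [Finite A]

theorem exists_fst_eq [WellFoundedLT C] (hg : Injective g) {b : B} (hb : SupPrime b) :
    ∃ x : FiberProduct f g, x.1.1 = b := by
  obtain ⟨c, hc, -, hbc⟩ := exists_supPrime_le_forall_le_iff f g hb (c := ⊤) fun a ha => by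
    rw [(hg.eq_iff' (map_top g)).1 (top_le_iff.1 ha), map_top]
    exact le_top
  exact ⟨⟨(b, c), hb, hc, hbc⟩, rfl⟩

theorem exists_snd_eq [WellFoundedLT B] (hf : Injective f) {c : C} (hc : SupPrime c) :
    ∃ x : FiberProduct f g, x.1.2 = c := by
  obtain ⟨⟨⟨_, b⟩, h, hb, hcb⟩, rfl⟩ := exists_fst_eq (f := g) hf hc
  exact ⟨⟨(b, _), hb, h, fun a => (hcb a).symm⟩, rfl⟩

theorem isPMorphism_fst [WellFoundedLT C] : IsPMorphism fun x : FiberProduct f g => x.1.1 where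
  supPrime x := x.2.1
  monotone _ _ h := h.1
  exists_le_eq x b hb hbx := by
    obtain ⟨c, hc, hcx, hbc⟩ := exists_supPrime_le_forall_le_iff f g hb fun a ha =>
      hbx.trans ((x.2.2.2 a).2 ha)
    exact ⟨⟨(b, c), hb, hc, hbc⟩, ⟨hbx, hcx⟩, rfl⟩

theorem isPMorphism_snd [WellFoundedLT B] : IsPMorphism fun x : FiberProduct f g => x.1.2 where
  supPrime x := x.2.2.1
  monotone _ _ h := h.2
  exists_le_eq x c hc hcx := by
    obtain ⟨b, hb, hbx, hcb⟩ := exists_supPrime_le_forall_le_iff g f hc fun a ha =>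
      hcx.trans ((x.2.2.2 a).1 ha)
    exact ⟨⟨(b, c), hb, hc, fun a => (hcb a).symm⟩, ⟨hbx, hcx⟩, rfl⟩

end FiberProduct

theorem exists_finite_amalgam [Finite A] [Finite B] [Finite C] {f : HeytingHom A B}
    {g : HeytingHom A C} (hf : Injective f) (hg : Injective g) :
    ∃ (D : HeytAlg.{max u v}) (_ : Finite D) (F : HeytingHom B D) (G : HeytingHom C D),
      Injective F ∧ Injective G ∧ F ∘ f = G ∘ g := by
  refine ⟨.of (LowerSet (FiberProduct f g)), inferInstanceAs (Finite (LowerSet _)),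
    FiberProduct.isPMorphism_fst.lowerSetHom, FiberProduct.isPMorphism_snd.lowerSetHom,
    IsPMorphism.lowerSetHom_injective _ fun _ => FiberProduct.exists_fst_eq hg,
    IsPMorphism.lowerSetHom_injective _ fun _ => FiberProduct.exists_snd_eq hf, ?_⟩
  exact funext fun a => LowerSet.ext <| Set.ext fun x => x.2.2.2 a

theorem exists_finite_joint_extension {J : Type w} [Finite J] {A : HeytAlg.{u}} [Finite A]
    {L : J → HeytAlg.{u}} [∀ j, Finite (L j)] {f : ∀ j, HeytingHom A (L j)}
    (hf : ∀ j, Injective (f j)) :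
    ∃ (B : HeytAlg.{u}) (_ : Finite B) (i : HeytingHom A B), Injective i ∧
      ∀ j, ∃ g : HeytingHom (L j) B, Injective g ∧ g ∘ f j = i := by
  classical
  cases nonempty_fintype J
  suffices h : ∀ T : Finset J, ∃ (B : HeytAlg.{u}) (_ : Finite B) (i : HeytingHom A B),
      Injective i ∧ ∀ j ∈ T, ∃ g : HeytingHom (L j) B, Injective g ∧ g ∘ f j = i by
    simpa using h Finset.univ
  intro T
  induction T using Finset.induction_on with
  | empty => exact ⟨A, inferInstance, .id A, injective_id, by simp⟩
  | insert j T _ ih =>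
    obtain ⟨B, _, i, hi, hB⟩ := ih
    obtain ⟨D, hD, F, G, hF, hG, hFG⟩ := exists_finite_amalgam hi (hf j)
    refine ⟨D, hD, F.comp i, hF.comp hi, fun k hk => ?_⟩
    obtain rfl | hk := Finset.mem_insert.1 hk
    · exact ⟨G, hG, hFG.symm⟩
    · obtain ⟨g, hg, hgi⟩ := hB k hk
      exact ⟨F.comp g, hF.comp hg, congrArg (F ∘ ·) hgi⟩

end Amalgamation

/-! ### Solving finitely many systems in one finite extension -/

deriving instance Countable for HeytingTerm

/-- A system `(t, s₁, …, s_κ)` in `l` parameters and `m` unknowns, bundled with its dimensions so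
that all systems form a single countable type. -/
structure HeytingSystem where
  l : ℕ
  m : ℕ
  κ : ℕ
  t : HeytingTerm (l + m)
  s : Fin κ → HeytingTerm (l + m)
  deriving Countable

namespace HeytingSystem

instance : Nonempty HeytingSystem := ⟨⟨0, 0, 0, .top, fun _ => .top⟩⟩

variable (S : HeytingSystem)

/-- Solvability in some finite extension of `A`, taken in the universe of `A`. -/
def FinSolvable {A : Type u} [HeytingAlgebra A] (a : Fin S.l → A) : Prop :=
  ∃ (L : HeytAlg.{u}) (_ : Finite L) (j : HeytingHom A L),
    Injective j ∧ HasSolution S.t S.s (j ∘ a)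

/-- The extension `i` of `A` solves every instance of the system over `A` that is solvable in
some finite extension of `A`. -/
def SolvedBy {A : Type u} {B : Type v} [HeytingAlgebra A] [HeytingAlgebra B]
    (i : HeytingHom A B) : Prop :=
  ∀ a : Fin S.l → A, S.FinSolvable a → HasSolution S.t S.s (i ∘ a)

variable {S}

theorem finSolvable_of_hasSolution {A : Type u} {K : Type v} [HeytingAlgebra A] [Finite A]
    [HeytingAlgebra K] {f : HeytingHom A K} (hf : Injective f) {a : Fin S.l → A}
    (h : HasSolution S.t S.s (f ∘ a)) : S.FinSolvable a := by
  obtain ⟨X, _, j, hj, hX⟩ := exists_finite_hasSolution hf h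
  obtain ⟨L, hL, g, hg⟩ := exists_finite_extension_universe.{v, u} X
  exact ⟨L, hL, g.comp j, hg.comp hj, hX.map hg⟩

theorem exists_finite_extension_forall_solvedBy (A : HeytAlg.{u}) [Finite A]
    (T : Finset HeytingSystem) :
    ∃ (B : HeytAlg.{u}) (_ : Finite B) (i : HeytingHom A B),
      Injective i ∧ ∀ S ∈ T, S.SolvedBy i := by
  let J := {p : Σ S : T, Fin S.1.l → A // p.1.1.FinSolvable p.2}
  choose L hfin j hj hsol using fun p : J => p.2
  obtain ⟨B, hB, i, hi, hemb⟩ := exists_finite_joint_extension hj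
  refine ⟨B, hB, i, hi, fun S hS a ha => ?_⟩
  obtain ⟨g, hg, hgi⟩ := hemb ⟨⟨⟨S, hS⟩, a⟩, ha⟩
  rw [← hgi]
  exact (hsol ⟨⟨⟨S, hS⟩, a⟩, ha⟩).map hg

end HeytingSystem

/-! ### Direct limits of Heyting algebras -/

/-- The range of a Heyting homomorphism, as a subalgebra. -/
def HeytingSubalgebra.range {H : Type u} {K : Type v} [HeytingAlgebra H] [HeytingAlgebra K]
    (f : HeytingHom H K) : HeytingSubalgebra K where
  carrier := Set.range f
  bot_mem := ⟨⊥, map_bot f⟩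
  top_mem := ⟨⊤, map_top f⟩
  inf_mem := by
    rintro _ _ ⟨a, rfl⟩ ⟨b, rfl⟩
    exact ⟨a ⊓ b, map_inf f a b⟩
  sup_mem := by
    rintro _ _ ⟨a, rfl⟩ ⟨b, rfl⟩
    exact ⟨a ⊔ b, map_sup f a b⟩
  himp_mem := by
    rintro _ _ ⟨a, rfl⟩ ⟨b, rfl⟩
    exact ⟨a ⇨ b, map_himp f a b⟩

namespace HeytingDirectLimit

variable {ι : Type u} [Preorder ι] {F : ι → Type v} [∀ i, HeytingAlgebra (F i)]
  {f : ∀ i j, i ≤ j → HeytingHom (F i) (F j)} [DirectedSystem F (f · · ·)]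

theorem map_le_map_of_le {i j k n : ι} {hik : i ≤ k} {hjk : j ≤ k} {a : F i} {b : F j}
    (h : f i k hik a ≤ f j k hjk b) (hkn : k ≤ n) :
    f i n (hik.trans hkn) a ≤ f j n (hjk.trans hkn) b := by
  rw [← DirectedSystem.map_map' f hik hkn, ← DirectedSystem.map_map' f hjk hkn]
  exact OrderHomClass.mono _ h

variable [IsDirectedOrder ι]

-- The order on `DirectLimit F f` is the one Mathlib puts on the quotient of a sigma type.
theorem mk_le_mk_iff {x y : Σ i, F i} : (⟦x⟧ : DirectLimit F f) ≤ ⟦y⟧ ↔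
    ∃ (i : ι) (hx : x.1 ≤ i) (hy : y.1 ≤ i), f x.1 i hx x.2 ≤ f y.1 i hy y.2 := by
  refine ⟨fun h => ?_, fun ⟨i, hx, hy, h⟩ => ?_⟩
  · have of_step {x y : Σ i, F i} (h : x ≤ y ∨ DirectLimit.setoid f x y) :
        ∃ (i : ι) (hx : x.1 ≤ i) (hy : y.1 ≤ i), f x.1 i hx x.2 ≤ f y.1 i hy y.2 := by
      obtain ⟨i, a, b, hab⟩ | ⟨i, hx, hy, h⟩ := h
      · exact ⟨i, le_rfl, le_rfl, OrderHomClass.mono _ hab⟩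
      · exact ⟨i, hx, hy, h.le⟩
    rw [Quotient.le_def] at h
    induction h with
    | single h => exact of_step h
    | tail _ h ih =>
      obtain ⟨i, hx, hy, hxy⟩ := ih
      obtain ⟨j, hy', hz, hyz⟩ := of_step h
      obtain ⟨k, hik, hjk⟩ := exists_ge_ge i j
      exact ⟨k, hx.trans hik, hz.trans hjk,
        (map_le_map_of_le hxy hik).trans (map_le_map_of_le hyz hjk)⟩
  · rw [DirectLimit.eq_of_le x i hx, DirectLimit.eq_of_le y i hy]
    exact Quotient.mk_monotone (Sigma.mk_le_mk_iff.2 h)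

theorem mk_mono {i : ι} {a b : F i} (h : a ≤ b) : (⟦⟨i, a⟩⟧ : DirectLimit F f) ≤ ⟦⟨i, b⟩⟧ :=
  Quotient.mk_monotone (Sigma.mk_le_mk_iff.2 h)

theorem exists_map_le_map_and {i : ι} {a b c d : F i}
    (hab : (⟦⟨i, a⟩⟧ : DirectLimit F f) ≤ ⟦⟨i, b⟩⟧)
    (hcd : (⟦⟨i, c⟩⟧ : DirectLimit F f) ≤ ⟦⟨i, d⟩⟧) :
    ∃ (j : ι) (h : i ≤ j), f i j h a ≤ f i j h b ∧ f i j h c ≤ f i j h d := by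
  obtain ⟨j, hij, _, hab⟩ := mk_le_mk_iff.1 hab
  obtain ⟨k, hik, _, hcd⟩ := mk_le_mk_iff.1 hcd
  obtain ⟨n, hjn, hkn⟩ := exists_ge_ge j k
  exact ⟨n, hij.trans hjn, map_le_map_of_le hab hjn, map_le_map_of_le hcd hkn⟩

instance : PartialOrder (DirectLimit F f) where
  le_antisymm x y hxy hyx := by
    obtain ⟨i, a, b, rfl, rfl⟩ := DirectLimit.exists_eq_mk₂ f x y
    obtain ⟨j, hij, hab, hba⟩ := exists_map_le_map_and hxy hyx
    exact Quotient.sound ⟨j, hij, hij, hab.antisymm hba⟩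

noncomputable instance : Max (DirectLimit F f) where
  max := DirectLimit.map₂ f f f (fun _ => (· ⊔ ·)) fun _ _ _ => map_sup _

noncomputable instance : Min (DirectLimit F f) where
  min := DirectLimit.map₂ f f f (fun _ => (· ⊓ ·)) fun _ _ _ => map_inf _

noncomputable instance : HImp (DirectLimit F f) where
  himp := DirectLimit.map₂ f f f (fun _ => (· ⇨ ·)) fun _ _ _ => map_himp _

variable {i : ι} (a b : F i)

theorem mk_sup : (⟦⟨i, a⟩⟧ ⊔ ⟦⟨i, b⟩⟧ : DirectLimit F f) = ⟦⟨i, a ⊔ b⟩⟧ :=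
  DirectLimit.map₂_def ..

theorem mk_inf : (⟦⟨i, a⟩⟧ ⊓ ⟦⟨i, b⟩⟧ : DirectLimit F f) = ⟦⟨i, a ⊓ b⟩⟧ :=
  DirectLimit.map₂_def ..

theorem mk_himp : (⟦⟨i, a⟩⟧ ⇨ ⟦⟨i, b⟩⟧ : DirectLimit F f) = ⟦⟨i, a ⇨ b⟩⟧ :=
  DirectLimit.map₂_def ..

noncomputable instance : Lattice (DirectLimit F f) where
  sup := (· ⊔ ·)
  inf := (· ⊓ ·)
  le_sup_left x y := by
    obtain ⟨i, a, b, rfl, rfl⟩ := DirectLimit.exists_eq_mk₂ f x y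
    exact (mk_mono le_sup_left).trans_eq (mk_sup a b).symm
  le_sup_right x y := by
    obtain ⟨i, a, b, rfl, rfl⟩ := DirectLimit.exists_eq_mk₂ f x y
    exact (mk_mono le_sup_right).trans_eq (mk_sup a b).symm
  sup_le x y z hxz hyz := by
    obtain ⟨i, a, b, c, rfl, rfl, rfl⟩ := DirectLimit.exists_eq_mk₃ f x y z
    obtain ⟨j, hij, hac, hbc⟩ := exists_map_le_map_and hxz hyz
    rw [mk_sup, mk_le_mk_iff]
    exact ⟨j, hij, hij, (map_sup _ a b).trans_le (sup_le hac hbc)⟩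
  inf_le_left x y := by
    obtain ⟨i, a, b, rfl, rfl⟩ := DirectLimit.exists_eq_mk₂ f x y
    exact (mk_inf a b).trans_le (mk_mono inf_le_left)
  inf_le_right x y := by
    obtain ⟨i, a, b, rfl, rfl⟩ := DirectLimit.exists_eq_mk₂ f x y
    exact (mk_inf a b).trans_le (mk_mono inf_le_right)
  le_inf x y z hxy hxz := by
    obtain ⟨i, a, b, c, rfl, rfl, rfl⟩ := DirectLimit.exists_eq_mk₃ f x y z
    obtain ⟨j, hij, hab, hac⟩ := exists_map_le_map_and hxy hxz
    rw [mk_inf, mk_le_mk_iff]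
    exact ⟨j, hij, hij, (le_inf hab hac).trans_eq (map_inf _ b c).symm⟩

variable [Nonempty ι]

noncomputable instance : Bot (DirectLimit F f) where
  bot := DirectLimit.map₀ f fun _ => ⊥

noncomputable instance : Top (DirectLimit F f) where
  top := DirectLimit.map₀ f fun _ => ⊤

theorem mk_bot (i : ι) : (⟦⟨i, ⊥⟩⟧ : DirectLimit F f) = ⊥ :=
  (DirectLimit.map₀_def f _ (fun _ _ _ => map_bot _) i).symm

theorem mk_top (i : ι) : (⟦⟨i, ⊤⟩⟧ : DirectLimit F f) = ⊤ :=
  (DirectLimit.map₀_def f _ (fun _ _ _ => map_top _) i).symm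

noncomputable instance : HeytingAlgebra (DirectLimit F f) where
  le_top x := by
    obtain ⟨i, a, rfl⟩ := DirectLimit.exists_eq_mk f x
    exact mk_top (f := f) i ▸ mk_mono le_top
  bot_le x := by
    obtain ⟨i, a, rfl⟩ := DirectLimit.exists_eq_mk f x
    exact mk_bot (f := f) i ▸ mk_mono bot_le
  le_himp_iff x y z := by
    obtain ⟨i, a, b, c, rfl, rfl, rfl⟩ := DirectLimit.exists_eq_mk₃ f x y z
    rw [mk_himp, mk_inf, mk_le_mk_iff, mk_le_mk_iff]
    simp only [map_himp, map_inf, le_himp_iff]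
  compl x := x ⇨ ⊥
  himp_bot _ := rfl

variable (f) in
/-- The canonical homomorphism from a stage into the direct limit. -/
noncomputable def of (i : ι) : HeytingHom (F i) (DirectLimit F f) where
  toFun a := ⟦⟨i, a⟩⟧
  map_sup' a b := (mk_sup a b).symm
  map_inf' a b := (mk_inf a b).symm
  map_bot' := mk_bot i
  map_himp' a b := (mk_himp a b).symm

theorem of_injective (hf : ∀ i j h, Injective (f i j h)) (i : ι) : Injective (of f i) :=
  DirectLimit.mk_injective f hf i

theorem of_comp_map {i j : ι} (h : i ≤ j) : of f j ∘ f i j h = of f i :=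
  funext fun a => DirectLimit.mk_apply i j a h

theorem exists_of_comp_eq {κ : Type w} [Finite κ] (x : κ → DirectLimit F f) :
    ∃ (i : ι) (a : κ → F i), of f i ∘ a = x := by
  choose n a ha using fun k => DirectLimit.exists_eq_mk f (x k)
  obtain ⟨i, hi⟩ := Finite.exists_le n
  exact ⟨i, fun k => f _ _ (hi k) (a k),
    funext fun k => (DirectLimit.mk_apply _ _ (a k) (hi k)).trans (ha k).symm⟩

theorem locallyFiniteHA [∀ i, Finite (F i)] : LocallyFiniteHA (DirectLimit F f) := by
  intro s
  obtain ⟨i, a, ha⟩ := exists_of_comp_eq (Subtype.val : s → DirectLimit F f)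
  exact ⟨.range (of f i), Set.finite_range _, fun x hx => ⟨a ⟨x, hx⟩, congrFun ha ⟨x, hx⟩⟩⟩

theorem isExtClosed [∀ i, Finite (F i)] (hf : ∀ i j h, Injective (f i j h))
    (hsolved : ∀ (S : HeytingSystem) (i : ι),
      ∃ (j : ι) (_ : i ≤ j) (k : ι) (hjk : j ≤ k), S.SolvedBy (f j k hjk)) :
    IsExtClosed.{_, w} (DirectLimit F f) := by
  intro K _ g hg l m κ t s x hx
  obtain ⟨i, a, rfl⟩ := exists_of_comp_eq x
  obtain ⟨j, hij, k, hjk, hS⟩ := hsolved ⟨l, m, κ, t, s⟩ i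
  have hfin : HeytingSystem.FinSolvable ⟨l, m, κ, t, s⟩ (f i j hij ∘ a) := by
    refine HeytingSystem.finSolvable_of_hasSolution (f := g.comp (of f j))
      (hg.comp (of_injective hf j)) ?_
    rwa [HeytingHom.coe_comp, comp_assoc, ← comp_assoc (of f j), of_comp_map]
  have hsol := (hS _ hfin).map (of_injective hf k)
  rwa [← comp_assoc, of_comp_map, ← comp_assoc, of_comp_map] at hsol

end HeytingDirectLimit

/-! ### The chain of finite Heyting algebras -/

theorem directedSystem_nat_injective {F : ℕ → Type u} {f : ∀ ⦃m n⦄, m ≤ n → F m → F n}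
    [DirectedSystem F f] (hf : ∀ n : ℕ, Injective (f n.le_succ)) (m n : ℕ) (hmn : m ≤ n) :
    Injective (f hmn) := by
  induction n, hmn using Nat.le_induction with
  | base => exact LeftInverse.injective (g := id) fun x => DirectedSystem.map_self x
  | succ n hmn ih =>
    have hcomp : f n.le_succ ∘ f hmn = f (hmn.trans n.le_succ) :=
      funext (DirectedSystem.map_map hmn n.le_succ)
    exact hcomp ▸ (hf n).comp ih

section Chain

open CategoryTheory (Functor homOfLE)

/-- The transition homomorphisms of a diagram of Heyting algebras indexed by a preorder, in the
unbundled form that `DirectLimit` expects. -/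
def transition {ι : Type u} [Preorder ι] (F : Functor ι HeytAlg.{v}) (i j : ι) (h : i ≤ j) :
    HeytingHom (F.obj i) (F.obj j) :=
  (F.map (homOfLE h)).hom

instance {ι : Type u} [Preorder ι] (F : Functor ι HeytAlg.{v}) :
    DirectedSystem (fun i => F.obj i) (transition F · · ·) where
  map_self i x := congrArg (fun φ => φ.hom x) (F.map_id i)
  map_map _ _ _ hij hjk x :=
    congrArg (fun φ => φ.hom x) (F.map_comp (homOfLE hij) (homOfLE hjk)).symm

theorem exists_chain_solvedBy (A : Type u) [HeytingAlgebra A] [Finite A] :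
    ∃ (F : Functor ℕ HeytAlg.{u}) (i : HeytingHom A (F.obj 0)), Injective i ∧
      (∀ n, Finite (F.obj n)) ∧
      (∀ n : ℕ, Injective (transition F n (n + 1) n.le_succ)) ∧
      ∀ S : HeytingSystem, ∃ c : ℕ, ∀ n ≥ c, S.SolvedBy (transition F n (n + 1) n.le_succ) := by
  classical
  obtain ⟨e, he⟩ := exists_surjective_nat HeytingSystem
  choose next hfin i hi hsolved using
    fun (n : ℕ) (B : {B : HeytAlg.{u} // Finite B}) => have := B.2
      HeytingSystem.exists_finite_extension_forall_solvedBy B.1 ((Finset.range (n + 1)).image e)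
  let stage (n : ℕ) : {B : HeytAlg.{u} // Finite B} :=
    n.rec ⟨.of A, ‹_›⟩ fun n B => ⟨next n B, hfin n B⟩
  let F : Functor ℕ HeytAlg.{u} := .ofSequence (X := fun n => (stage n).1)
    fun n => HeytAlg.ofHom (i n (stage n))
  have transition_succ (n : ℕ) : transition F n (n + 1) n.le_succ = i n (stage n) :=
    congrArg HeytAlg.Hom.hom (Functor.ofSequence_map_homOfLE_succ _ n)
  refine ⟨F, .id A, injective_id, fun n => (stage n).2, fun n => ?_, fun S => ?_⟩
  · exact transition_succ n ▸ hi n (stage n)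
  · obtain ⟨c, rfl⟩ := he S
    refine ⟨c, fun n hn => transition_succ n ▸ hsolved n (stage n) _ ?_⟩
    exact Finset.mem_image_of_mem e (Finset.mem_range_succ_iff.2 hn)

theorem exists_countable_locallyFinite_extClosed_extension (A : Type u) [HeytingAlgebra A]
    [Finite A] :
    ∃ (H : HeytAlg.{u}) (i : HeytingHom A H),
      Injective i ∧ Countable H ∧ LocallyFiniteHA H ∧ IsExtClosed.{u, v} H := by
  obtain ⟨F, i, hi, hfin, hinj, hsolved⟩ := exists_chain_solvedBy A
  have hinj := directedSystem_nat_injective (f := (transition F · · ·)) hinj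
  refine ⟨.of (DirectLimit (fun n => F.obj n) (transition F)),
    (HeytingDirectLimit.of (transition F) 0).comp i,
    (HeytingDirectLimit.of_injective hinj 0).comp hi, inferInstanceAs (Countable (Quotient _)),
    HeytingDirectLimit.locallyFiniteHA,
    HeytingDirectLimit.isExtClosed hinj fun S n => ?_⟩
  obtain ⟨c, hc⟩ := hsolved S
  exact ⟨max n c, le_max_left n c, _, Nat.le_succ _, hc _ (le_max_right n c)⟩

end Chain

/-- There exists a nontrivial, countable, locally finite, existentially closed Heyting
algebra. -/
theorem exists_nontrivial_countable_locallyFinite_extClosed :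
    ∃ (H : Type) (inst : HeytingAlgebra H),
      letI := inst
      (⊥ : H) ≠ ⊤ ∧ Countable H ∧ LocallyFiniteHA H ∧ IsExtClosed H := by
  obtain ⟨H, i, hi, hcount, hfin, hclosed⟩ :=
    exists_countable_locallyFinite_extClosed_extension Bool
  refine ⟨H, inferInstance, fun h => ?_, hcount, hfin, hclosed⟩
  rw [← map_bot i, ← map_top i] at h
  exact Bool.false_ne_true (hi h)
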